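/- arXiv:2101.01680 — 3 statements merged into one kernel-verified Lean document; each statement's English description precedes it below -/
import Mathlib

section
/- Under the stated parameter constraints, Re S(t)/t^{1+α/2} → −2·cos(θ/2)/(α+2) as t → +∞; in particular, since 0 < θ < π, Re S(t) → −∞ as t → +∞. -/
open MeasureTheory Set Filter

/-- `t₀(α) = 2πα/(α+2)`. -/
noncomputable def t0 (α : ℝ) : ℝ := 2 * Real.pi * α / (α + 2)

/-!
Put `u = e^{iθ/2}` and `w(t) = u t^{α/2}`, so that `g² - w² = -e^{iφ}` has norm `1`. The square
`(ū g)² = t^α - e^{i(φ-θ)}` never meets the half-line `(-∞, 0]`, so `Re (ū g)` never vanishes and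
stays negative, as at `t = 0`, where it equals `-sin ((θ - φ) / 2)`. Hence `g` is no farther from
`-w` than from `w`, which gives `‖g + w‖² ≤ ‖g + w‖ ‖g - w‖ = ‖g² - w²‖ = 1`. Integrating,
`S(t) = -u t^{1+α/2} / (1 + α/2) + O(t)`.
-/

lemma re_ne_zero_of_sq_mem_slitPlane {z : ℂ} (hz : z ^ 2 ∈ Complex.slitPlane) : z.re ≠ 0 := by
  intro hre
  rw [Complex.mem_slitPlane_iff, sq, Complex.mul_re, Complex.mul_im, hre] at hz
  rcases hz with hpos | him
  · nlinarith [mul_self_nonneg z.im]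
  · simp at him

lemma re_neg_of_sq_mem_slitPlane {X : Type*} [TopologicalSpace X] {s : Set X}
    (hs : IsPreconnected s) {f : X → ℂ} (hf : ContinuousOn f s)
    (hsq : ∀ x ∈ s, f x ^ 2 ∈ Complex.slitPlane) {x₀ : X} (hx₀ : x₀ ∈ s) (h₀ : (f x₀).re < 0)
    {x : X} (hx : x ∈ s) : (f x).re < 0 := by
  by_contra! hnonneg
  obtain ⟨y, hy, hy0⟩ := hs.intermediate_value hx₀ hx (Complex.continuous_re.comp_continuousOn hf)
    ⟨h₀.le, hnonneg⟩
  exact re_ne_zero_of_sq_mem_slitPlane (hsq y hy) hy0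

lemma ofReal_sub_mem_slitPlane {r : ℝ} (hr : 0 ≤ r) {v : ℂ} (hv : ‖v‖ = 1) (hv1 : v ≠ 1) :
    (r : ℂ) - v ∈ Complex.slitPlane := by
  by_contra hmem
  obtain ⟨hre, him⟩ : r ≤ v.re ∧ v.im = 0 := by
    simpa [Complex.mem_slitPlane_iff, not_or] using hmem
  have hv_re : (v.re : ℂ) = v := Complex.ext rfl him.symm
  have hre1 : v.re = 1 := by
    rw [← hv, ← hv_re, Complex.norm_real, Complex.ofReal_re, Real.norm_of_nonneg (hr.trans hre)]
  exact hv1 (by rw [← hv_re, hre1, Complex.ofReal_one])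

lemma norm_add_sq_le_norm_sq_sub_sq {z w : ℂ} (h : inner ℝ z w ≤ 0) :
    ‖z + w‖ ^ 2 ≤ ‖z ^ 2 - w ^ 2‖ := by
  have hle : ‖z + w‖ ≤ ‖z - w‖ := by
    refine le_of_sq_le_sq ?_ (norm_nonneg _)
    rw [norm_add_sq_real, norm_sub_sq_real]
    linarith
  calc ‖z + w‖ ^ 2 ≤ ‖z + w‖ * ‖z - w‖ := by rw [sq]; gcongr
    _ = ‖z ^ 2 - w ^ 2‖ := by rw [← norm_mul, sq_sub_sq]

section SquareRootBranch

variable {X : Type*} [TopologicalSpace X] {s : Set X} {g : X → ℂ} {r : X → ℝ} {u μ : ℂ} {x₀ x : X}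

lemma inner_neg_of_sq_eq (hs : IsPreconnected s) (hg : ContinuousOn g s) (hu : ‖u‖ = 1)
    (hμ : ‖μ‖ = 1) (hne : μ ≠ u ^ 2) (hsq : ∀ y ∈ s, g y ^ 2 = (u * r y) ^ 2 - μ)
    (hx₀ : x₀ ∈ s) (h₀ : inner ℝ (g x₀) u < 0) (hx : x ∈ s) : inner ℝ (g x) u < 0 := by
  have huu : u * starRingEnd ℂ u = 1 := by rw [Complex.mul_conj', hu]; norm_num
  have hv : ‖μ * starRingEnd ℂ u ^ 2‖ = 1 := by simp [hu, hμ]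
  have hv1 : μ * starRingEnd ℂ u ^ 2 ≠ 1 := fun h => hne <| by
    linear_combination u ^ 2 * h - μ * (u * starRingEnd ℂ u + 1) * huu
  have hsq' : ∀ y ∈ s, (g y * starRingEnd ℂ u) ^ 2 ∈ Complex.slitPlane := fun y hy => by
    have heq : (g y * starRingEnd ℂ u) ^ 2 = ((r y ^ 2 : ℝ) : ℂ) - μ * starRingEnd ℂ u ^ 2 := by
      push_cast
      linear_combination starRingEnd ℂ u ^ 2 * hsq y hy
        + (r y : ℂ) ^ 2 * (u * starRingEnd ℂ u + 1) * huu
    exact heq ▸ ofReal_sub_mem_slitPlane (sq_nonneg _) hv hv1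
  rw [real_inner_comm, Complex.inner] at h₀ ⊢
  exact re_neg_of_sq_mem_slitPlane hs (hg.mul continuousOn_const) hsq' hx₀ h₀ hx

lemma norm_add_le_one_of_sq_eq (hs : IsPreconnected s) (hg : ContinuousOn g s)
    (hr : 0 ≤ r x) (hu : ‖u‖ = 1) (hμ : ‖μ‖ = 1) (hne : μ ≠ u ^ 2)
    (hsq : ∀ y ∈ s, g y ^ 2 = (u * r y) ^ 2 - μ) (hx₀ : x₀ ∈ s) (h₀ : inner ℝ (g x₀) u < 0)
    (hx : x ∈ s) : ‖g x + u * r x‖ ≤ 1 := by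
  have hinner : inner ℝ (g x) (u * r x) ≤ 0 := by
    rw [mul_comm, ← Complex.real_smul, real_inner_smul_right]
    exact mul_nonpos_of_nonneg_of_nonpos hr
      (inner_neg_of_sq_eq hs hg hu hμ hne hsq hx₀ h₀ hx).le
  have hle : ‖g x + u * r x‖ ^ 2 ≤ 1 := by
    simpa [hsq x hx, hμ] using norm_add_sq_le_norm_sq_sub_sq hinner
  exact (sq_le_one_iff₀ (norm_nonneg _)).mp hle

end SquareRootBranch

section PowerAsymptotics

variable {E : Type*} [NormedAddCommGroup E] [NormedSpace ℝ E] [CompleteSpace E]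
  {f : ℝ → E} {c : E} {p M : ℝ}

lemma norm_integral_sub_rpow_smul_le (hp : -1 < p) {t : ℝ} (ht : 0 ≤ t)
    (hf : IntervalIntegrable f volume 0 t)
    (hM : ∀ s ∈ Ioc 0 t, ‖f s - s ^ p • c‖ ≤ M) :
    ‖(∫ s in (0 : ℝ)..t, f s) - (t ^ (1 + p) / (1 + p)) • c‖ ≤ M * t := by
  have hpow : (∫ s in (0 : ℝ)..t, s ^ p • c) = (t ^ (1 + p) / (1 + p)) • c := by
    rw [intervalIntegral.integral_smul_const, integral_rpow (Or.inl hp),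
      Real.zero_rpow (by linarith), sub_zero, add_comm p]
  have hpow_int : IntervalIntegrable (fun s : ℝ => s ^ p • c) volume 0 t :=
    (intervalIntegral.intervalIntegrable_rpow' hp).smul_continuousOn continuousOn_const
  rw [← hpow, ← intervalIntegral.integral_sub hf hpow_int]
  have hle : ‖∫ s in (0 : ℝ)..t, (f s - s ^ p • c)‖ ≤ M * |t - 0| :=
    intervalIntegral.norm_integral_le_of_norm_le_const (by rwa [uIoc_of_le ht])
  rwa [sub_zero, abs_of_nonneg ht] at hle

lemma tendsto_rpow_inv_smul_integral (hp : 0 < p)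
    (hf : ∀ t, 0 < t → IntervalIntegrable f volume 0 t)
    (hM : ∀ s, 0 < s → ‖f s - s ^ p • c‖ ≤ M) :
    Tendsto (fun t : ℝ => (t ^ (1 + p))⁻¹ • ∫ s in (0 : ℝ)..t, f s) atTop
      (nhds ((1 + p)⁻¹ • c)) := by
  rw [tendsto_iff_norm_sub_tendsto_zero]
  have hzero : Tendsto (fun t : ℝ => M * t ^ (-p)) atTop (nhds 0) := by
    simpa using (tendsto_rpow_neg_atTop hp).const_mul M
  refine squeeze_zero' (Eventually.of_forall fun _ => norm_nonneg _) ?_ hzero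
  filter_upwards [eventually_gt_atTop 0] with t ht
  have hpow : 0 < t ^ (1 + p) := Real.rpow_pos_of_pos ht _
  calc ‖(t ^ (1 + p))⁻¹ • (∫ s in (0 : ℝ)..t, f s) - (1 + p)⁻¹ • c‖
      = (t ^ (1 + p))⁻¹ * ‖(∫ s in (0 : ℝ)..t, f s) - (t ^ (1 + p) / (1 + p)) • c‖ := by
        rw [← norm_smul_of_nonneg (inv_nonneg.mpr hpow.le), smul_sub, smul_smul, div_eq_mul_inv,
          inv_mul_cancel_left₀ hpow.ne']
    _ ≤ (t ^ (1 + p))⁻¹ * (M * t) := by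
        gcongr
        exact norm_integral_sub_rpow_smul_le (by linarith) ht.le (hf t ht) fun s hs => hM s hs.1
    _ = M * t ^ (-p) := by
        rw [Real.rpow_add ht, Real.rpow_one, Real.rpow_neg ht.le]
        field_simp

end PowerAsymptotics

section ExponentialPath

variable {α θ φ : ℝ}

lemma exp_I_mul_ne_of_sin_half_sub_ne_zero (h : Real.sin ((θ - φ) / 2) ≠ 0) :
    Complex.exp (Complex.I * φ) ≠ Complex.exp (Complex.I * θ) := by
  intro heq
  have hone : Complex.exp (Complex.I * ((θ - φ : ℝ) : ℂ)) = 1 := by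
    rw [Complex.ofReal_sub, mul_sub, Complex.exp_sub, heq, div_self (Complex.exp_ne_zero _)]
  have hnorm := Complex.norm_exp_I_mul_ofReal_sub_one (θ - φ)
  rw [hone, sub_self, norm_zero, eq_comm, norm_eq_zero] at hnorm
  exact h ((mul_eq_zero_iff_left two_ne_zero).mp hnorm)

lemma inner_neg_I_mul_exp_exp (a b : ℝ) :
    inner ℝ (-Complex.I * Complex.exp (Complex.I * b)) (Complex.exp (Complex.I * a))
      = -Real.sin (a - b) := by
  simp [Complex.inner, mul_comm Complex.I, Complex.exp_ofReal_mul_I_re,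
    Complex.exp_ofReal_mul_I_im, Real.sin_sub]

lemma norm_branch_add_exp_mul_rpow_le_one (hsin : 0 < Real.sin ((θ - φ) / 2)) {g : ℝ → ℂ}
    (hgcont : ContinuousOn g (Ici 0))
    (hgsq : ∀ t : ℝ, 0 ≤ t →
      g t ^ 2 = Complex.exp (Complex.I * (θ : ℂ)) * ((t ^ α : ℝ) : ℂ)
        - Complex.exp (Complex.I * (φ : ℂ)))
    (hg0 : g 0 = -Complex.I * Complex.exp (Complex.I * ((φ / 2 : ℝ) : ℂ))) {t : ℝ} (ht : 0 ≤ t) :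
    ‖g t + Complex.exp (Complex.I * ((θ / 2 : ℝ) : ℂ)) * ((t ^ (α / 2) : ℝ) : ℂ)‖ ≤ 1 := by
  set u : ℂ := Complex.exp (Complex.I * ((θ / 2 : ℝ) : ℂ)) with hu
  have hu_sq : u ^ 2 = Complex.exp (Complex.I * θ) := by
    rw [hu, ← Complex.exp_nat_mul]
    congr 1
    push_cast
    ring
  have hne : Complex.exp (Complex.I * φ) ≠ u ^ 2 := by
    rw [hu_sq]
    exact exp_I_mul_ne_of_sin_half_sub_ne_zero hsin.ne'
  have hsq : ∀ s ∈ Ici (0 : ℝ),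
      g s ^ 2 = (u * ((s ^ (α / 2) : ℝ) : ℂ)) ^ 2 - Complex.exp (Complex.I * φ) := fun s hs => by
    rw [hgsq s hs, mul_pow, hu_sq, ← Complex.ofReal_pow, ← Real.rpow_mul_natCast hs,
      Nat.cast_two, div_mul_cancel₀ α two_ne_zero]
  have hinner : inner ℝ (g 0) u < 0 := by
    rw [hg0, hu, inner_neg_I_mul_exp_exp, ← sub_div]
    exact neg_lt_zero.mpr hsin
  exact norm_add_le_one_of_sq_eq (r := (· ^ (α / 2))) isPreconnected_Ici hgcont
    (Real.rpow_nonneg ht _) (Complex.norm_exp_I_mul_ofReal _) (Complex.norm_exp_I_mul_ofReal _)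
    hne hsq self_mem_Ici hinner ht

end ExponentialPath

section Parameters

variable {α θ δ φ : ℝ}

lemma t0_pos (hα : 0 < α) : 0 < t0 α := by
  unfold t0
  positivity

lemma cos_half_pos_of_t0_le (hα : 0 < α) (hθ : t0 α ≤ θ) (hθpi : θ < Real.pi) :
    0 < Real.cos (θ / 2) := by
  have hθ0 : 0 < θ := (t0_pos hα).trans_le hθ
  exact Real.cos_pos_of_mem_Ioo ⟨by linarith, by linarith⟩

lemma sin_half_sub_pos_of_lt_t0 (hα : 0 < α) (hθ : t0 α ≤ θ)
    (hδ : δ < (Real.pi * min 1 α - θ) / 2) (hφ1 : t0 α - δ < φ) (hφ2 : φ < t0 α) :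
    0 < Real.sin ((θ - φ) / 2) := by
  have ht0 : 0 < t0 α := t0_pos hα
  have hmin : Real.pi * min 1 α ≤ Real.pi :=
    mul_le_of_le_one_right Real.pi_pos.le (min_le_left _ _)
  exact Real.sin_pos_of_pos_of_lt_pi (by linarith) (by linarith)

end Parameters

theorem stmt10_general (α θ φ : ℝ) (hα : 0 < α) (hsin : 0 < Real.sin ((θ - φ) / 2))
    (g : ℝ → ℂ) (hgcont : ContinuousOn g (Ici 0))
    (hgsq : ∀ t : ℝ, 0 ≤ t →
      g t ^ 2 = Complex.exp (Complex.I * (θ : ℂ)) * ((t ^ α : ℝ) : ℂ)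
        - Complex.exp (Complex.I * (φ : ℂ)))
    (hg0 : g 0 = -Complex.I * Complex.exp (Complex.I * ((φ / 2 : ℝ) : ℂ)))
    (S : ℝ → ℂ) (hS : ∀ t : ℝ, S t = ∫ s in (0 : ℝ)..t, g s) :
    Tendsto (fun t : ℝ => (S t).re / t ^ (1 + α / 2)) atTop
      (nhds (-2 * Real.cos (θ / 2) / (α + 2))) ∧
    (0 < Real.cos (θ / 2) → Tendsto (fun t : ℝ => (S t).re) atTop atBot) := by
  have hgint : ∀ t : ℝ, 0 < t → IntervalIntegrable g volume 0 t := fun t ht =>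
    (hgcont.mono Icc_subset_Ici_self).intervalIntegrable_of_Icc ht.le
  have hbound : ∀ t : ℝ, 0 < t →
      ‖g t - t ^ (α / 2) • -Complex.exp (Complex.I * ((θ / 2 : ℝ) : ℂ))‖ ≤ 1 := fun t ht => by
    rw [smul_neg, sub_neg_eq_add, Complex.real_smul, mul_comm]
    exact norm_branch_add_exp_mul_rpow_le_one hsin hgcont hgsq hg0 ht.le
  have hlim : Tendsto (fun t : ℝ => (S t).re / t ^ (1 + α / 2)) atTop
      (nhds (-2 * Real.cos (θ / 2) / (α + 2))) := by
    convert (Complex.continuous_re.tendsto _).comp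
      (tendsto_rpow_inv_smul_integral (half_pos hα) hgint hbound) using 2 with t
    · rw [hS, Function.comp_apply, Complex.smul_re, smul_eq_mul, div_eq_inv_mul]
    · rw [Complex.smul_re, Complex.neg_re, mul_comm Complex.I, Complex.exp_ofReal_mul_I_re,
        smul_eq_mul]
      field_simp
      ring
  refine ⟨hlim, fun hcos => tendsto_neg_atTop_iff.mp ?_⟩
  have hlim_pos : 0 < -(-2 * Real.cos (θ / 2) / (α + 2)) := by
    rw [neg_mul, neg_div, neg_neg]
    positivity
  refine (tendsto_rpow_atTop (by positivity : 0 < 1 + α / 2)).num hlim_pos ?_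
  simpa only [neg_div] using hlim.neg

/-- with `c = e^{iθ}`, `μ = e^{iφ}`, `g` the continuous branch of
`√(c t^α − μ)` on `[0,∞)` with `g(0) = −i e^{iφ/2}` and `S(t) = ∫₀^t g`:
`Re S(t)/t^{1+α/2} → −2 cos(θ/2)/(α+2)` as `t → +∞`, and `Re S(t) → −∞`. -/
theorem stmt10 (α θ δ φ : ℝ) (hα0 : 0 < α) (hα2 : α < 2)
    (hθ1 : t0 α ≤ θ) (hθ2 : θ < min Real.pi (Real.pi * α))
    (hδ1 : 0 < δ) (hδ2 : δ < (Real.pi * min 1 α - θ) / 2)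
    (hφ1 : t0 α - δ < φ) (hφ2 : φ < t0 α)
    (g : ℝ → ℂ) (hgcont : ContinuousOn g (Set.Ici 0))
    (hgsq : ∀ t : ℝ, 0 ≤ t →
      g t ^ 2 = Complex.exp (Complex.I * (θ : ℂ)) * ((t ^ α : ℝ) : ℂ)
        - Complex.exp (Complex.I * (φ : ℂ)))
    (hg0 : g 0 = -Complex.I * Complex.exp (Complex.I * ((φ / 2 : ℝ) : ℂ)))
    (S : ℝ → ℂ) (hS : ∀ t : ℝ, S t = ∫ s in (0 : ℝ)..t, g s) :
    Tendsto (fun t : ℝ => (S t).re / t ^ (1 + α / 2)) atTop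
      (nhds (-2 * Real.cos (θ / 2) / (α + 2))) ∧
    Tendsto (fun t : ℝ => (S t).re) atTop atBot :=
  (stmt10_general α θ φ hα0 (sin_half_sub_pos_of_lt_t0 hα0 hθ1 hδ2 hφ1 hφ2) g hgcont hgsq hg0
    S hS).imp_right (· (cos_half_pos_of_t0_le hα0 hθ1 (hθ2.trans_le (min_le_left _ _))))
end

section
/- Under the stated parameter constraints, Re[−i·e^{i((φ−θ)/α + φ/2)}] = sin((φ−θ)/α + φ/2) > 0. Consequently Re S(ζ₀) > 0, where ζ₀ = e^{i(φ−θ)/α} is the turning point (μ/c)^{1/α} and S(ζ₀) = −i·e^{i((φ−θ)/α + φ/2)}·∫₀^1 √(1−u^α) du is the integral of the continuous branch of √(c ζ^α − μ) with initial value −i e^{iφ/2} along the segment from 0 to ζ₀. -/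
open MeasureTheory Set

/-!
Multiplication by `-i` turns the real part of `e^{ix}` into `sin x`, so everything depends on the
phase `x = (φ - θ)/α + φ/2` lying in `(0, π)`. As a function of `φ` the phase is affine with slope
`(α + 2)/(2α)`; it vanishes at `φ = 2θ/(α + 2)` and has gained `π` after a further `t₀(α)`. For
`0 ≤ θ ≤ πα`, `α ≤ 2` and `δ ≤ (πα - θ)/2` this window contains `(t₀(α) - δ, t₀(α))`: its right
end is at least `t₀(α)`, and its left end is `t₀(α) - 2(πα - θ)/(α + 2)`, where `2/(α + 2) ≥ 1/2`.
-/

theorem t0_nonneg {α : ℝ} (hα : 0 ≤ α) : 0 ≤ t0 α :=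
  div_nonneg (mul_nonneg Real.two_pi_pos.le hα) (by positivity)

theorem re_neg_I_mul_exp_I_mul_ofReal (x : ℝ) :
    (-Complex.I * Complex.exp (Complex.I * (x : ℂ))).re = Real.sin x := by
  rw [neg_mul, Complex.neg_re, Complex.I_mul_re, neg_neg, mul_comm, Complex.exp_ofReal_mul_I_im]

theorem integral_sqrt_one_sub_rpow_pos {α : ℝ} (hα : 0 < α) :
    0 < ∫ u in (0 : ℝ)..1, Real.sqrt (1 - u ^ α) := by
  have hcont : Continuous fun u : ℝ ↦ Real.sqrt (1 - u ^ α) :=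
    Real.continuous_sqrt.comp (continuous_const.sub (Real.continuous_rpow_const hα.le))
  have hpos : ∀ u ∈ Ioo (0 : ℝ) 1, 0 < Real.sqrt (1 - u ^ α) := fun u hu ↦
    Real.sqrt_pos.mpr (sub_pos.mpr (Real.rpow_lt_one hu.1.le hu.2 hα))
  exact intervalIntegral.intervalIntegral_pos_of_pos_on (hcont.intervalIntegrable 0 1) hpos one_pos

theorem phase_mem_Ioo_zero_pi_iff {α θ φ : ℝ} (hα : 0 < α) :
    (φ - θ) / α + φ / 2 ∈ Ioo 0 Real.pi ↔
      φ ∈ Ioo (2 * θ / (α + 2)) (2 * θ / (α + 2) + t0 α) := by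
  have hα' : 0 < α + 2 := by positivity
  have hphase : (φ - θ) / α + φ / 2 = (φ * (α + 2) - 2 * θ) / (2 * α) := by
    field_simp
    ring
  have hright : 2 * θ / (α + 2) + t0 α = (2 * θ + Real.pi * (2 * α)) / (α + 2) := by
    rw [t0, ← add_div]
    ring
  rw [hphase, hright, mem_Ioo, mem_Ioo]
  refine and_congr ?_ ?_
  · rw [div_pos_iff_of_pos_right (by positivity), sub_pos, div_lt_iff₀ hα']
  · rw [div_lt_iff₀ (by positivity), sub_lt_iff_lt_add', lt_div_iff₀ hα']

theorem two_mul_div_le_t0_sub {α θ δ : ℝ} (hα : -2 < α) (hα2 : α ≤ 2)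
    (hθ : θ ≤ Real.pi * α) (hδ : δ ≤ (Real.pi * α - θ) / 2) :
    2 * θ / (α + 2) ≤ t0 α - δ := by
  have hα' : 0 < α + 2 := by linarith
  have hδ_le : δ ≤ 2 * (Real.pi * α - θ) / (α + 2) :=
    calc
      δ ≤ (Real.pi * α - θ) / 2 := hδ
      _ = 2 * (Real.pi * α - θ) / 4 := by ring
      _ ≤ 2 * (Real.pi * α - θ) / (α + 2) :=
        div_le_div_of_nonneg_left (by linarith) hα' (by linarith)
  have hgap : 2 * (Real.pi * α - θ) / (α + 2) = t0 α - 2 * θ / (α + 2) := by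
    rw [t0, ← sub_div]
    ring
  linarith

theorem Ioo_t0_sub_subset {α θ δ : ℝ} (hα2 : α ≤ 2)
    (hθ : θ ∈ Icc 0 (Real.pi * α)) (hδ : δ ≤ (Real.pi * α - θ) / 2) :
    Ioo (t0 α - δ) (t0 α) ⊆ Ioo (2 * θ / (α + 2)) (2 * θ / (α + 2) + t0 α) := by
  have hα0 : 0 ≤ α := nonneg_of_mul_nonneg_right (hθ.1.trans hθ.2) Real.pi_pos
  have hleft : 0 ≤ 2 * θ / (α + 2) := div_nonneg (mul_nonneg zero_le_two hθ.1) (by positivity)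
  exact Ioo_subset_Ioo (two_mul_div_le_t0_sub (by linarith) hα2 hθ.2 hδ)
    (le_add_of_nonneg_left hleft)

theorem stmt11_general {α θ φ : ℝ} (hα : 0 < α)
    (hφ : φ ∈ Ioo (2 * θ / (α + 2)) (2 * θ / (α + 2) + t0 α)) :
    (-Complex.I * Complex.exp (Complex.I * (((φ - θ) / α + φ / 2 : ℝ) : ℂ))).re
      = Real.sin ((φ - θ) / α + φ / 2) ∧
    0 < Real.sin ((φ - θ) / α + φ / 2) ∧
    0 < (-Complex.I * Complex.exp (Complex.I * (((φ - θ) / α + φ / 2 : ℝ) : ℂ)) *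
      ((∫ u in (0 : ℝ)..1, Real.sqrt (1 - u ^ α) : ℝ) : ℂ)).re := by
  have hsin : 0 < Real.sin ((φ - θ) / α + φ / 2) :=
    Real.sin_pos_of_mem_Ioo ((phase_mem_Ioo_zero_pi_iff hα).mpr hφ)
  refine ⟨re_neg_I_mul_exp_I_mul_ofReal _, hsin, ?_⟩
  rw [Complex.re_mul_ofReal, re_neg_I_mul_exp_I_mul_ofReal]
  exact mul_pos hsin (integral_sqrt_one_sub_rpow_pos hα)

/-- under the parameter constraints,
`Re[−i e^{i((φ−θ)/α + φ/2)}] = sin((φ−θ)/α + φ/2) > 0`; consequently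
`Re S(ζ₀) > 0`, where `S(ζ₀) = −i e^{i((φ−θ)/α + φ/2)} ∫₀¹ √(1−u^α) du`. -/
theorem stmt11 (α θ δ φ : ℝ) (hα0 : 0 < α) (hα2 : α < 2)
    (hθ1 : t0 α ≤ θ) (hθ2 : θ < min Real.pi (Real.pi * α))
    (hδ1 : 0 < δ) (hδ2 : δ < (Real.pi * min 1 α - θ) / 2)
    (hφ1 : t0 α - δ < φ) (hφ2 : φ < t0 α) :
    (-Complex.I * Complex.exp (Complex.I * (((φ - θ) / α + φ / 2 : ℝ) : ℂ))).re
      = Real.sin ((φ - θ) / α + φ / 2) ∧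
    0 < Real.sin ((φ - θ) / α + φ / 2) ∧
    0 < (-Complex.I * Complex.exp (Complex.I * (((φ - θ) / α + φ / 2 : ℝ) : ℂ)) *
      ((∫ u in (0 : ℝ)..1, Real.sqrt (1 - u ^ α) : ℝ) : ℂ)).re := by
  have hδ : δ ≤ (Real.pi * α - θ) / 2 := hδ2.le.trans (by gcongr; exact min_le_right 1 α)
  exact stmt11_general hα0 (Ioo_t0_sub_subset hα2.le
    ⟨(t0_nonneg hα0.le).trans hθ1, (lt_min_iff.mp hθ2).2.le⟩ hδ ⟨hφ1, hφ2⟩)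
end

section
/- Under the stated parameter constraints, for t ≥ 0 the value q(t) = c t^α − μ is a real number if and only if t = Z₀, and q(Z₀) < 0. -/
open MeasureTheory Set

/-!
The ray `r ↦ r e^{iθ}` meets the horizontal line through `e^{iφ}` exactly once, at
`r = sin φ / sin θ`, and there `r e^{iθ} - e^{iφ} = -sin (θ - φ) / sin θ`, which is negative as soon
as `0 < φ < θ < π`. That `φ` is positive follows from
`φ > t₀(α) - δ ≥ (3 t₀(α) - π α) / 2 = π α (4 - α) / (2 (α + 2))`.
-/

lemma pi_mul_le_three_mul_t0 {α : ℝ} (hα0 : 0 ≤ α) (hα4 : α ≤ 4) : Real.pi * α ≤ 3 * t0 α := by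
  have hnum : Real.pi * α * (α + 2) ≤ Real.pi * α * 6 := by gcongr; linarith
  rw [t0, ← mul_div_assoc, le_div_iff₀ (by linarith)]
  linarith

lemma pos_of_t0_sub_lt {α θ δ φ : ℝ} (hα0 : 0 ≤ α) (hα4 : α ≤ 4) (hθ : t0 α ≤ θ)
    (hδ : δ ≤ (Real.pi * α - θ) / 2) (hφ : t0 α - δ < φ) : 0 < φ := by
  linarith [pi_mul_le_three_mul_t0 hα0 hα4]

lemma im_exp_mul_sub_exp_eq_zero_iff {θ : ℝ} (hθ : Real.sin θ ≠ 0) (φ r : ℝ) :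
    (Complex.exp (Complex.I * θ) * r - Complex.exp (Complex.I * φ)).im = 0 ↔
      r = Real.sin φ / Real.sin θ := by
  rw [mul_comm Complex.I, mul_comm Complex.I, Complex.sub_im, Complex.im_mul_ofReal,
    Complex.exp_ofReal_mul_I_im, Complex.exp_ofReal_mul_I_im, sub_eq_zero, eq_div_iff hθ, mul_comm]

lemma exp_mul_sin_div_sin_sub_exp {θ : ℂ} (hθ : Complex.sin θ ≠ 0) (φ : ℂ) :
    Complex.exp (Complex.I * θ) * (Complex.sin φ / Complex.sin θ) - Complex.exp (Complex.I * φ) =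
      -(Complex.sin (θ - φ) / Complex.sin θ) := by
  rw [mul_comm Complex.I, mul_comm Complex.I, Complex.exp_mul_I, Complex.exp_mul_I,
    Complex.sin_sub]
  field_simp
  ring

theorem stmt12_general {α θ φ : ℝ} (hα : 0 < α) (hφ : 0 < φ) (hφθ : φ < θ) (hθ : θ < Real.pi)
    {q : ℝ → ℂ}
    (hq : ∀ t : ℝ, q t = Complex.exp (Complex.I * (θ : ℂ)) * ((t ^ α : ℝ) : ℂ)
      - Complex.exp (Complex.I * (φ : ℂ)))
    {Z₀ : ℝ} (hZ₀ : Z₀ = (Real.sin φ / Real.sin θ) ^ (1 / α)) :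
    (∀ t : ℝ, 0 ≤ t → ((q t).im = 0 ↔ t = Z₀)) ∧
    (q Z₀).im = 0 ∧ (q Z₀).re < 0 := by
  have hsinθ : 0 < Real.sin θ := Real.sin_pos_of_pos_of_lt_pi (hφ.trans hφθ) hθ
  have hsinφ : 0 < Real.sin φ := Real.sin_pos_of_pos_of_lt_pi hφ (hφθ.trans hθ)
  have hsin_sub : 0 < Real.sin (θ - φ) :=
    Real.sin_pos_of_pos_of_lt_pi (sub_pos.2 hφθ) (by linarith)
  have hratio : 0 ≤ Real.sin φ / Real.sin θ := (div_pos hsinφ hsinθ).le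
  rw [one_div] at hZ₀
  have hreal (t : ℝ) (ht : 0 ≤ t) : (q t).im = 0 ↔ t = Z₀ := by
    rw [hq, im_exp_mul_sub_exp_eq_zero_iff hsinθ.ne', hZ₀, Real.eq_rpow_inv ht hratio hα.ne']
  have hqZ₀ : q Z₀ = (-(Real.sin (θ - φ) / Real.sin θ) : ℝ) := by
    rw [hq, hZ₀, Real.rpow_inv_rpow hratio hα.ne']
    push_cast
    exact exp_mul_sin_div_sin_sub_exp (mod_cast hsinθ.ne') φ
  refine ⟨hreal, ?_, ?_⟩
  · rw [hqZ₀, Complex.ofReal_im]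
  · rw [hqZ₀, Complex.ofReal_re]
    exact neg_neg_of_pos (div_pos hsin_sub hsinθ)

/-- with `c = e^{iθ}`, `μ = e^{iφ}`, `q(t) = c t^α − μ` and
`Z₀ = (sin φ / sin θ)^{1/α}`: for `t ≥ 0` the value `q(t)` is real iff `t = Z₀`,
and `q(Z₀)` is a negative real number. -/
theorem stmt12 (α θ δ φ : ℝ) (hα0 : 0 < α) (hα2 : α < 2)
    (hθ1 : t0 α ≤ θ) (hθ2 : θ < min Real.pi (Real.pi * α))
    (hδ1 : 0 < δ) (hδ2 : δ < (Real.pi * min 1 α - θ) / 2)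
    (hφ1 : t0 α - δ < φ) (hφ2 : φ < t0 α)
    (q : ℝ → ℂ)
    (hq : ∀ t : ℝ, q t = Complex.exp (Complex.I * (θ : ℂ)) * ((t ^ α : ℝ) : ℂ)
      - Complex.exp (Complex.I * (φ : ℂ)))
    (Z₀ : ℝ) (hZ₀ : Z₀ = (Real.sin φ / Real.sin θ) ^ (1 / α)) :
    (∀ t : ℝ, 0 ≤ t → ((q t).im = 0 ↔ t = Z₀)) ∧
    (q Z₀).im = 0 ∧ (q Z₀).re < 0 := by
  have hδ : δ ≤ (Real.pi * α - θ) / 2 := hδ2.le.trans (by gcongr; exact min_le_right 1 α)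
  exact stmt12_general hα0 (pos_of_t0_sub_lt hα0.le (by linarith) hθ1 hδ hφ1)
    (hφ2.trans_le hθ1) (hθ2.trans_le (min_le_left _ _)) hq hZ₀
end
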